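/- Let F = g/ω be a Kropina metric and F̂ = ĝ/ω another Kropina metric with the same 1-form, with ĝ = αg + β·ω (symmetrized) for a smooth function α and a 1-form β. If F and F̂ have the same geodesics (are projectively equivalent) and ker ω is a non-integrable distribution (ω∧dω ≠ 0 on a dense set), then α is constant and β is closed, i.e., F̂ = cF + β with c constant and dβ = 0. -/

import Mathlib

open scoped BigOperators

/-- Partial derivative of `f` at `p` in the `k`-th coordinate direction. -/
noncomputable def pd {n : ℕ} (f : (Fin n → ℝ) → ℝ) (p : Fin n → ℝ) (k : Fin n) : ℝ :=
  fderiv ℝ f p (Pi.single k 1)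

/-- `ω(ξ)`, the denominator of the Kropina metric. -/
noncomputable def Fden {n : ℕ} (ω : Fin n → (Fin n → ℝ) → ℝ) (p ξ : Fin n → ℝ) : ℝ :=
  ∑ l, ω l p * ξ l

/-- `g(ξ,ξ)`, the numerator of the Kropina metric. -/
noncomputable def Fnum {n : ℕ} (g : Fin n → Fin n → (Fin n → ℝ) → ℝ) (p ξ : Fin n → ℝ) : ℝ :=
  ∑ i, ∑ j, g i j p * ξ i * ξ j

/-- `∂F/∂x^k` for the Kropina Lagrangian `F = g(ξ,ξ)/ω(ξ)`. -/
noncomputable def Fx {n : ℕ} (g : Fin n → Fin n → (Fin n → ℝ) → ℝ)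
    (ω : Fin n → (Fin n → ℝ) → ℝ) (k : Fin n) (p ξ : Fin n → ℝ) : ℝ :=
  (Fden ω p ξ)⁻¹ * (∑ i, ∑ j, pd (g i j) p k * ξ i * ξ j)
    - ((Fden ω p ξ)⁻¹) ^ 2 * (∑ l, pd (ω l) p k * ξ l) * Fnum g p ξ

/-- `∂F/∂ξ^k` for the Kropina Lagrangian `F = g(ξ,ξ)/ω(ξ)`. -/
noncomputable def Fxi {n : ℕ} (g : Fin n → Fin n → (Fin n → ℝ) → ℝ)
    (ω : Fin n → (Fin n → ℝ) → ℝ) (k : Fin n) (p ξ : Fin n → ℝ) : ℝ :=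
  2 * (Fden ω p ξ)⁻¹ * (∑ j, g k j p * ξ j)
    - ((Fden ω p ξ)⁻¹) ^ 2 * ω k p * Fnum g p ξ

/-- A curve `x` is a (Kropina) geodesic of `F = g/ω` on `s` if `ω(x') ≠ 0` there and
the Euler–Lagrange equations `d/dt (∂F/∂ξ^k) = ∂F/∂x^k` hold. -/
def IsKropinaGeodesicOn {n : ℕ} (g : Fin n → Fin n → (Fin n → ℝ) → ℝ)
    (ω : Fin n → (Fin n → ℝ) → ℝ) (x : ℝ → Fin n → ℝ) (s : Set ℝ) : Prop :=
  ∀ t ∈ s, Fden ω (x t) (deriv x t) ≠ 0 ∧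
    ∀ k, HasDerivAt (fun u => Fxi g ω k (x u) (deriv x u))
      (Fx g ω k (x t) (deriv x t)) t

/-- Christoffel symbols `Γ_{ij}^k` of the metric `g` (`ginv` its inverse). -/
noncomputable def Christoffel {n : ℕ} (g ginv : Fin n → Fin n → (Fin n → ℝ) → ℝ)
    (i j k : Fin n) (p : Fin n → ℝ) : ℝ :=
  (1 / 2) * ∑ l, ginv k l p * (pd (g j l) p i + pd (g i l) p j - pd (g i j) p l)

/-!
A Kropina metric `F = g / ω` is homogeneous of degree one in the velocity, and nondegeneracy of `g`
on `ker ω` says precisely that its velocity Hessian degenerates only along the velocity. Making the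
Hessian invertible by adding the square of a covector turns the Euler–Lagrange equation into an
ordinary differential equation, so through every tangent vector `ξ` with `ω (ξ) ≠ 0` there is a
geodesic of `F`.

Since `F̂ = α F + β`, comparing the two Euler–Lagrange equations along this common geodesic gives
`dα (ξ) ∂F/∂ξ + dβ (ξ, ·) = F dα` for every such `ξ`, where `dβ` denotes the exterior derivative.
After clearing denominators both sides are polynomial in `ξ`, so the identity extends to
`ξ ∈ ker ω`. Where `ω ≠ 0` this forces `dα = 0`, and then `dβ = 0`; points where `ω ≠ 0` are dense.
-/

section ParametricLagrangians

variable {E : Type*} [NormedAddCommGroup E] [NormedSpace ℝ E]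

/-- The derivative `∂L/∂x` of a Lagrangian `L (x, ξ)` in the position variable. -/
noncomputable def positionDeriv (L : E × E → ℝ) (z : E × E) : E →L[ℝ] ℝ :=
  fderiv ℝ L z ∘L ContinuousLinearMap.inl ℝ E E

/-- The momentum `∂L/∂ξ` conjugate to the velocity variable of a Lagrangian `L (x, ξ)`. -/
noncomputable def momentum (L : E × E → ℝ) (z : E × E) : E →L[ℝ] ℝ :=
  fderiv ℝ L z ∘L ContinuousLinearMap.inr ℝ E E

/-- The Hessian `∂²L/∂ξ²` of a Lagrangian `L (x, ξ)` in the velocity variable, as a map from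
tangent vectors to covectors. -/
noncomputable def velocityHessian (L : E × E → ℝ) (z : E × E) : E →L[ℝ] E →L[ℝ] ℝ :=
  fderiv ℝ (momentum L) z ∘L ContinuousLinearMap.inr ℝ E E

/-- The curve `x` satisfies the Euler–Lagrange equation of `L` at every time in `s`. -/
def IsExtremalOn (L : E × E → ℝ) (x : ℝ → E) (s : Set ℝ) : Prop :=
  ∀ t ∈ s, HasDerivAt (fun u => momentum L (x u, deriv x u)) (positionDeriv L (x t, deriv x t)) t

/-- A smooth Lagrangian on the open set `U` of tangent vectors whose extremals are determined up to
reparametrization: it satisfies Euler's identity for functions of degree one in the velocity, and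
its Hessian degenerates only along the velocity itself. -/
structure IsRegularParametricOn (L : E × E → ℝ) (U : Set (E × E)) : Prop where
  isOpen : IsOpen U
  contDiffOn : ContDiffOn ℝ (⊤ : ℕ∞) L U
  momentum_velocity : ∀ z ∈ U, momentum L z z.2 = L z
  mem_span_velocity : ∀ z ∈ U, ∀ v, velocityHessian L z v = 0 → v ∈ Submodule.span ℝ {z.2}

/-- The velocity Hessian of `L` made invertible by adding the square of a covector `θ`. -/
noncomputable def regularizedHessian (L : E × E → ℝ) (θ : E →L[ℝ] ℝ) (z : E × E) :
    E →L[ℝ] E →L[ℝ] ℝ :=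
  velocityHessian L z + θ.smulRight θ

variable {L : E × E → ℝ} {U : Set (E × E)} {θ : E →L[ℝ] ℝ}

theorem fderiv_apply_eq_positionDeriv_add_momentum (L : E × E → ℝ) (z : E × E) (u v : E) :
    fderiv ℝ L z (u, v) = positionDeriv L z u + momentum L z v := by
  simp [positionDeriv, momentum, ← map_add]

theorem contDiffOn_momentum (hU : IsOpen U) (hL : ContDiffOn ℝ (⊤ : ℕ∞) L U) :
    ContDiffOn ℝ (⊤ : ℕ∞) (momentum L) U :=
  (hL.fderiv_of_isOpen hU (by simp)).clm_comp contDiffOn_const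

theorem contDiffOn_positionDeriv (hU : IsOpen U) (hL : ContDiffOn ℝ (⊤ : ℕ∞) L U) :
    ContDiffOn ℝ (⊤ : ℕ∞) (positionDeriv L) U :=
  (hL.fderiv_of_isOpen hU (by simp)).clm_comp contDiffOn_const

theorem contDiffOn_fderiv_momentum (hU : IsOpen U) (hL : ContDiffOn ℝ (⊤ : ℕ∞) L U) :
    ContDiffOn ℝ (⊤ : ℕ∞) (fderiv ℝ (momentum L)) U :=
  (contDiffOn_momentum hU hL).fderiv_of_isOpen hU (by simp)

theorem hasFDerivAt_momentum (hU : IsOpen U) (hL : ContDiffOn ℝ (⊤ : ℕ∞) L U) {z : E × E}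
    (hz : z ∈ U) : HasFDerivAt (momentum L) (fderiv ℝ (momentum L) z) z :=
  (((contDiffOn_momentum hU hL).differentiableOn (by simp)).differentiableAt
    (hU.mem_nhds hz)).hasFDerivAt

namespace IsRegularParametricOn

theorem mono (hL : IsRegularParametricOn L U) {U' : Set (E × E)} (hU' : IsOpen U') (h : U' ⊆ U) :
    IsRegularParametricOn L U' :=
  ⟨hU', hL.contDiffOn.mono h, fun z hz => hL.momentum_velocity z (h hz),
    fun z hz => hL.mem_span_velocity z (h hz)⟩

-- Euler's identity `∂L/∂ξ (ξ) = L`, differentiated in the direction `(u, v)`.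
theorem fderiv_momentum_apply_velocity (hL : IsRegularParametricOn L U) {z : E × E} (hz : z ∈ U)
    (u v : E) : fderiv ℝ (momentum L) z (u, v) z.2 = positionDeriv L z u := by
  have heuler : (fun z => momentum L z z.2) =ᶠ[nhds z] L := by
    filter_upwards [hL.isOpen.mem_nhds hz] with y hy using hL.momentum_velocity y hy
  have hfderiv : fderiv ℝ (momentum L) z (u, v) z.2 + momentum L z v = fderiv ℝ L z (u, v) := by
    rw [← heuler.fderiv_eq,
      ((hasFDerivAt_momentum hL.isOpen hL.contDiffOn hz).clm_apply hasFDerivAt_snd).fderiv]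
    simp [add_comm]
  rwa [fderiv_apply_eq_positionDeriv_add_momentum, add_left_inj] at hfderiv

theorem regularizedHessian_apply_velocity (hL : IsRegularParametricOn L U) {z : E × E}
    (hz : z ∈ U) (v : E) : regularizedHessian L θ z v z.2 = θ v * θ z.2 := by
  have h := hL.fderiv_momentum_apply_velocity hz 0 v
  rw [map_zero] at h
  simp [regularizedHessian, velocityHessian, h]

theorem contDiffOn_regularizedHessian (hL : IsRegularParametricOn L U) :
    ContDiffOn ℝ (⊤ : ℕ∞) (regularizedHessian L θ) U :=
  ((contDiffOn_fderiv_momentum hL.isOpen hL.contDiffOn).clm_comp contDiffOn_const).add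
    contDiffOn_const

end IsRegularParametricOn

theorem isInvertible_of_injective_dual [FiniteDimensional ℝ E] {T : E →L[ℝ] E →L[ℝ] ℝ}
    (hT : Function.Injective T) : T.IsInvertible := by
  have hdim : Module.finrank ℝ E = Module.finrank ℝ (E →L[ℝ] ℝ) :=
    Subspace.dual_finrank_eq.symm.trans LinearMap.toContinuousLinearMap.finrank_eq
  exact ⟨(T.toLinearMap.linearEquivOfInjective hT hdim).toContinuousLinearEquiv, rfl⟩

theorem contDiffOn_of_hasDerivAt_comp {W : E → E} {U : Set E} (hW : ContDiffOn ℝ (⊤ : ℕ∞) W U)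
    {γ : ℝ → E} {s : Set ℝ} (hs : IsOpen s) (hγU : Set.MapsTo γ s U)
    (hγ : ∀ t ∈ s, HasDerivAt γ (W (γ t)) t) : ContDiffOn ℝ (⊤ : ℕ∞) γ s := by
  rw [contDiffOn_infty]
  intro n
  induction n with
  | zero => exact contDiffOn_zero.2 (HasDerivAt.continuousOn hγ)
  | succ n ih =>
    push_cast
    rw [contDiffOn_succ_iff_deriv_of_isOpen hs]
    refine ⟨fun t ht => (hγ t ht).differentiableAt.differentiableWithinAt, by simp, ?_⟩
    exact ((hW.of_le (by exact_mod_cast le_top)).comp ih hγU).congr fun t ht => (hγ t ht).deriv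

theorem exists_contDiffOn_hasDerivAt_comp [CompleteSpace E] {W : E → E} {U : Set E}
    (hU : IsOpen U) (hW : ContDiffOn ℝ (⊤ : ℕ∞) W U) {z : E} (hz : z ∈ U) :
    ∃ (γ : ℝ → E) (s : Set ℝ), IsOpen s ∧ 0 ∈ s ∧ γ 0 = z ∧ ContDiffOn ℝ (⊤ : ℕ∞) γ s ∧
      Set.MapsTo γ s U ∧ ∀ t ∈ s, HasDerivAt γ (W (γ t)) t := by
  have hWz : ContDiffAt ℝ 1 W z := (hW.contDiffAt (hU.mem_nhds hz)).of_le (by simp)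
  obtain ⟨γ, hγ0, ε, hε, hγ⟩ :=
    hWz.exists_forall_mem_closedBall_exists_eq_forall_mem_Ioo_hasDerivAt₀ 0
  have hs : IsOpen (Set.Ioo (0 - ε) (0 + ε) ∩ γ ⁻¹' U) :=
    (HasDerivAt.continuousOn hγ).isOpen_inter_preimage isOpen_Ioo hU
  exact ⟨γ, _, hs, ⟨by simp [hε], by simpa [hγ0] using hz⟩, hγ0,
    contDiffOn_of_hasDerivAt_comp hW hs (fun t ht => ht.2) fun t ht => hγ t ht.1,
    fun t ht => ht.2, fun t ht => hγ t ht.1⟩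

namespace IsRegularParametricOn

variable [FiniteDimensional ℝ E]

theorem isInvertible_regularizedHessian (hL : IsRegularParametricOn L U) {z : E × E} (hz : z ∈ U)
    (hθ : θ z.2 ≠ 0) : (regularizedHessian L θ z).IsInvertible := by
  refine isInvertible_of_injective_dual ((injective_iff_map_eq_zero _).2 fun v hv => ?_)
  have hθv : θ v = 0 := by
    simpa [hv, hθ] using (hL.regularizedHessian_apply_velocity (θ := θ) hz v).symm
  obtain ⟨c, rfl⟩ := Submodule.mem_span_singleton.1
    (hL.mem_span_velocity z hz v (by simpa [regularizedHessian, hθv] using hv))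
  have hc : c = 0 := by simpa [hθ] using hθv
  rw [hc, zero_smul]

theorem exists_acceleration (hL : IsRegularParametricOn L U) (hθ : ∀ z ∈ U, θ z.2 ≠ 0) :
    ∃ V : E × E → E, ContDiffOn ℝ (⊤ : ℕ∞) V U ∧
      ∀ z ∈ U, fderiv ℝ (momentum L) z (z.2, V z) = positionDeriv L z := by
  have : CompleteSpace E := FiniteDimensional.complete ℝ E
  let force (z : E × E) : E →L[ℝ] ℝ := positionDeriv L z - fderiv ℝ (momentum L) z (z.2, 0)
  have hforce : ContDiffOn ℝ (⊤ : ℕ∞) force U :=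
    (contDiffOn_positionDeriv hL.isOpen hL.contDiffOn).sub
      ((contDiffOn_fderiv_momentum hL.isOpen hL.contDiffOn).clm_apply
        (contDiffOn_snd.prodMk contDiffOn_const))
  refine ⟨fun z => (regularizedHessian L θ z).inverse (force z), fun z hz => ?_, fun z hz => ?_⟩
  · exact (((hL.isInvertible_regularizedHessian hz (hθ z hz)).contDiffAt_map_inverse
      (n := (⊤ : ℕ∞))).comp_contDiffWithinAt z (hL.contDiffOn_regularizedHessian z hz)).clm_apply
        (hforce z hz)
  · set v := (regularizedHessian L θ z).inverse (force z)
    have hv : regularizedHessian L θ z v = force z :=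
      (hL.isInvertible_regularizedHessian hz (hθ z hz)).self_apply_inverse _
    -- The force annihilates the velocity, so the added square `θ²` does not contribute.
    have hθv : θ v = 0 := by
      have h := hL.regularizedHessian_apply_velocity (θ := θ) hz v
      simpa [hv, force, hL.fderiv_momentum_apply_velocity hz, hθ z hz] using h.symm
    have hHess : fderiv ℝ (momentum L) z (0, v) = force z := by
      simpa [regularizedHessian, velocityHessian, hθv] using hv
    have hsplit : (z.2, v) = (z.2, 0) + (0, v) := by simp
    rw [hsplit, map_add, hHess, add_sub_cancel]

theorem exists_isExtremalOn (hL : IsRegularParametricOn L U) {p ξ : E} (hpξ : (p, ξ) ∈ U)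
    (hξ : ξ ≠ 0) :
    ∃ (x : ℝ → E) (s : Set ℝ), IsOpen s ∧ 0 ∈ s ∧ ContDiffOn ℝ (⊤ : ℕ∞) x s ∧
      x 0 = p ∧ deriv x 0 = ξ ∧ (∀ t ∈ s, (x t, deriv x t) ∈ U) ∧ IsExtremalOn L x s := by
  have : CompleteSpace E := FiniteDimensional.complete ℝ E
  obtain ⟨θ, hθξ⟩ := SeparatingDual.exists_ne_zero (R := ℝ) hξ
  have hU' : IsOpen (U ∩ {z | θ z.2 ≠ 0}) :=
    hL.isOpen.inter (isOpen_ne_fun (by fun_prop) continuous_const)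
  obtain ⟨V, hV, hacc⟩ := (hL.mono hU' Set.inter_subset_left).exists_acceleration fun z hz => hz.2
  obtain ⟨γ, s, hs, hs0, hγ0, hγs, hγU, hγ⟩ :=
    exists_contDiffOn_hasDerivAt_comp hU' (contDiffOn_snd.prodMk hV) (z := (p, ξ)) ⟨hpξ, hθξ⟩
  have hx : ∀ t ∈ s, HasDerivAt (fun u => (γ u).1) (γ t).2 t := fun t ht => (hγ t ht).fst
  have hlift : ∀ t ∈ s, ((γ t).1, deriv (fun u => (γ u).1) t) = γ t := fun t ht => by
    rw [(hx t ht).deriv]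
  refine ⟨fun u => (γ u).1, s, hs, hs0, contDiff_fst.comp_contDiffOn hγs,
    congrArg Prod.fst hγ0,
    by rw [(hx 0 hs0).deriv, hγ0], fun t ht => by simpa only [hlift t ht] using (hγU ht).1,
    fun t ht => ?_⟩
  have hmom := (hasFDerivAt_momentum hL.isOpen hL.contDiffOn (hγU ht).1).comp_hasDerivAt t (hγ t ht)
  rw [hacc _ (hγU ht)] at hmom
  rw [hlift t ht]
  refine hmom.congr_of_eventuallyEq ?_
  filter_upwards [hs.mem_nhds ht] with u hu
  rw [hlift u hu, Function.comp_apply]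

end IsRegularParametricOn

end ParametricLagrangians

section ProjectiveChange

variable {E : Type*} [NormedAddCommGroup E] [NormedSpace ℝ E]
  {L Lhat : E × E → ℝ} {α : E → ℝ} {β : E → E →L[ℝ] ℝ} {z : E × E}

theorem fderiv_mul_add_apply (hLhat : Lhat =ᶠ[nhds z] fun y => α y.1 * L y + β y.1 y.2)
    (hL : DifferentiableAt ℝ L z) (hα : DifferentiableAt ℝ α z.1)
    (hβ : DifferentiableAt ℝ β z.1) (u v : E) :
    fderiv ℝ Lhat z (u, v) =
      α z.1 * fderiv ℝ L z (u, v) + L z * fderiv ℝ α z.1 u + fderiv ℝ β z.1 u z.2 + β z.1 v := by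
  have hα' := hα.hasFDerivAt.comp z hasFDerivAt_fst
  have hβ' := (hβ.hasFDerivAt.comp z hasFDerivAt_fst).clm_apply hasFDerivAt_snd
  have hsum : HasFDerivAt (fun y => α y.1 * L y + β y.1 y.2) _ z :=
    (hα'.mul hL.hasFDerivAt).add hβ'
  rw [hLhat.fderiv_eq, hsum.fderiv]
  simp only [Function.comp_apply, add_apply, smul_apply, smul_eq_mul,
    ContinuousLinearMap.comp_apply, ContinuousLinearMap.coe_fst', ContinuousLinearMap.coe_snd',
    ContinuousLinearMap.flip_apply]
  ring

theorem momentum_mul_add (hLhat : Lhat =ᶠ[nhds z] fun y => α y.1 * L y + β y.1 y.2)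
    (hL : DifferentiableAt ℝ L z) (hα : DifferentiableAt ℝ α z.1)
    (hβ : DifferentiableAt ℝ β z.1) : momentum Lhat z = α z.1 • momentum L z + β z.1 := by
  ext v
  simpa [momentum] using fderiv_mul_add_apply hLhat hL hα hβ 0 v

theorem positionDeriv_mul_add (hLhat : Lhat =ᶠ[nhds z] fun y => α y.1 * L y + β y.1 y.2)
    (hL : DifferentiableAt ℝ L z) (hα : DifferentiableAt ℝ α z.1)
    (hβ : DifferentiableAt ℝ β z.1) :
    positionDeriv Lhat z =
      α z.1 • positionDeriv L z + L z • fderiv ℝ α z.1 + (fderiv ℝ β z.1).flip z.2 := by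
  ext u
  simpa [positionDeriv] using fderiv_mul_add_apply hLhat hL hα hβ u 0

theorem IsExtremalOn.smul_momentum_add {U : Set (E × E)} {x : ℝ → E} {s : Set ℝ} {t : ℝ}
    (hU : IsOpen U) (hLhat : Set.EqOn Lhat (fun y => α y.1 * L y + β y.1 y.2) U)
    (hL : DifferentiableOn ℝ L U) (hα : Differentiable ℝ α) (hβ : Differentiable ℝ β)
    (hs : IsOpen s) (ht : t ∈ s) (hx : DifferentiableAt ℝ x t)
    (hxU : ∀ t ∈ s, (x t, deriv x t) ∈ U)
    (hxL : IsExtremalOn L x s) (hxLhat : IsExtremalOn Lhat x s) :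
    fderiv ℝ α (x t) (deriv x t) • momentum L (x t, deriv x t) + fderiv ℝ β (x t) (deriv x t) =
      L (x t, deriv x t) • fderiv ℝ α (x t) + (fderiv ℝ β (x t)).flip (deriv x t) := by
  have hev : ∀ z ∈ U, Lhat =ᶠ[nhds z] fun y => α y.1 * L y + β y.1 y.2 :=
    fun z hz => hLhat.eventuallyEq_of_mem (hU.mem_nhds hz)
  have hLd : ∀ z ∈ U, DifferentiableAt ℝ L z := fun z hz => hL.differentiableAt (hU.mem_nhds hz)
  have hmom : (fun u => momentum Lhat (x u, deriv x u)) =ᶠ[nhds t]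
      fun u => α (x u) • momentum L (x u, deriv x u) + β (x u) := by
    filter_upwards [hs.mem_nhds ht] with u hu
    exact momentum_mul_add (hev _ (hxU u hu)) (hLd _ (hxU u hu)) (hα _) (hβ _)
  have hα' := (hα (x t)).hasFDerivAt.comp_hasDerivAt t hx.hasDerivAt
  have hβ' := (hβ (x t)).hasFDerivAt.comp_hasDerivAt t hx.hasDerivAt
  have heq := (hxLhat t ht).unique (((hα'.smul (hxL t ht)).add hβ').congr_of_eventuallyEq hmom)
  rw [positionDeriv_mul_add (hev _ (hxU t ht)) (hLd _ (hxU t ht)) (hα _) (hβ _)] at heq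
  simp only [Function.comp_apply, add_assoc] at heq
  exact (add_left_cancel heq).symm

end ProjectiveChange

section Kropina

variable {E : Type*} [NormedAddCommGroup E] [NormedSpace ℝ E]

/-- The Kropina metric `g (ξ, ξ) / ω (ξ)` as a Lagrangian, with the value `0` where `ω (ξ) = 0`. -/
noncomputable def kropina (g : E → E →L[ℝ] E →L[ℝ] ℝ) (ω : E → E →L[ℝ] ℝ) (z : E × E) : ℝ :=
  g z.1 z.2 z.2 / ω z.1 z.2

/-- The tangent vectors on which a Kropina metric with denominator `ω` is defined. -/
def kropinaDomain (ω : E → E →L[ℝ] ℝ) : Set (E × E) :=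
  {z | ω z.1 z.2 ≠ 0}

/-- The curve `x` is a geodesic of the Kropina metric `g / ω` on `s`: its velocity stays in the
domain of the metric and the Euler–Lagrange equation holds. -/
def IsKropinaExtremalOn (g : E → E →L[ℝ] E →L[ℝ] ℝ) (ω : E → E →L[ℝ] ℝ) (x : ℝ → E)
    (s : Set ℝ) : Prop :=
  (∀ t ∈ s, (x t, deriv x t) ∈ kropinaDomain ω) ∧ IsExtremalOn (kropina g ω) x s

/-- The symmetric form `g` is nondegenerate on the hyperplane `ker ω`. -/
def NondegenerateOnKer (g : E →L[ℝ] E →L[ℝ] ℝ) (ω : E →L[ℝ] ℝ) : Prop :=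
  ∀ v, ω v = 0 → (∀ w, ω w = 0 → g v w = 0) → v = 0

variable {g ghat : E → E →L[ℝ] E →L[ℝ] ℝ} {ω β : E → E →L[ℝ] ℝ} {α : E → ℝ}

theorem isOpen_kropinaDomain (hω : Continuous ω) : IsOpen (kropinaDomain ω) :=
  isOpen_ne_fun (by fun_prop) continuous_const

theorem contDiffOn_kropina {n : WithTop ℕ∞} (hg : ContDiff ℝ n g) (hω : ContDiff ℝ n ω) :
    ContDiffOn ℝ n (kropina g ω) (kropinaDomain ω) :=
  (((hg.comp contDiff_fst).clm_apply contDiff_snd).clm_apply contDiff_snd).contDiffOn.div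
    ((hω.comp contDiff_fst).clm_apply contDiff_snd).contDiffOn fun _ hz => hz

theorem fderiv_kropina_apply {z : E × E} (hg : DifferentiableAt ℝ g z.1)
    (hω : DifferentiableAt ℝ ω z.1) (hz : ω z.1 z.2 ≠ 0) (u v : E) :
    fderiv ℝ (kropina g ω) z (u, v) =
      (fderiv ℝ g z.1 u z.2 z.2 + g z.1 v z.2 + g z.1 z.2 v) / ω z.1 z.2 -
        (fderiv ℝ ω z.1 u z.2 + ω z.1 v) * g z.1 z.2 z.2 / ω z.1 z.2 ^ 2 := by
  have hslot : HasFDerivAt (fun y : E × E => g y.1 y.2) _ z :=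
    (hg.hasFDerivAt.comp z (hasFDerivAt_fst (p := z))).clm_apply hasFDerivAt_snd
  have hnum : HasFDerivAt (fun y : E × E => g y.1 y.2 y.2) _ z := hslot.clm_apply hasFDerivAt_snd
  have hden : HasFDerivAt (fun y : E × E => ω y.1 y.2) _ z :=
    (hω.hasFDerivAt.comp z (hasFDerivAt_fst (p := z))).clm_apply hasFDerivAt_snd
  have hdiv : HasFDerivAt (kropina g ω) _ z :=
    hnum.mul ((hasDerivAt_inv hz).comp_hasFDerivAt z hden)
  rw [hdiv.fderiv]
  simp only [Function.comp_apply, smul_add, neg_smul, smul_neg, ContinuousLinearMap.flip_add,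
    add_apply, neg_apply, smul_apply, ContinuousLinearMap.comp_apply,
    ContinuousLinearMap.coe_snd', smul_eq_mul, ContinuousLinearMap.flip_apply,
    ContinuousLinearMap.coe_fst']
  field_simp
  ring

theorem momentum_kropina_apply {z : E × E} (hg : DifferentiableAt ℝ g z.1)
    (hω : DifferentiableAt ℝ ω z.1) (hsymm : ∀ v w, g z.1 v w = g z.1 w v)
    (hz : ω z.1 z.2 ≠ 0) (w : E) :
    momentum (kropina g ω) z w =
      2 * g z.1 w z.2 / ω z.1 z.2 - ω z.1 w * g z.1 z.2 z.2 / ω z.1 z.2 ^ 2 := by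
  have h := fderiv_kropina_apply hg hω hz 0 w
  simpa [momentum, hsymm z.2 w, two_mul] using h

theorem positionDeriv_kropina_apply {z : E × E} (hg : DifferentiableAt ℝ g z.1)
    (hω : DifferentiableAt ℝ ω z.1) (hz : ω z.1 z.2 ≠ 0) (u : E) :
    positionDeriv (kropina g ω) z u =
      fderiv ℝ g z.1 u z.2 z.2 / ω z.1 z.2 -
        fderiv ℝ ω z.1 u z.2 * g z.1 z.2 z.2 / ω z.1 z.2 ^ 2 := by
  simpa [positionDeriv] using fderiv_kropina_apply hg hω hz u 0

theorem velocityHessian_kropina_apply (hg : ContDiff ℝ (⊤ : ℕ∞) g) (hω : ContDiff ℝ (⊤ : ℕ∞) ω)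
    (hsymm : ∀ p v w, g p v w = g p w v) {p ξ w : E} (hξ : ω p ξ ≠ 0) (hw : ω p w = 0) (v : E) :
    velocityHessian (kropina g ω) (p, ξ) v w =
      2 / ω p ξ * g p (v - (ω p v / ω p ξ) • ξ) w := by
  have hU := isOpen_kropinaDomain hω.continuous
  have hcurve : HasDerivAt (fun s : ℝ => (p, ξ + s • v)) (0, v) 0 := by
    simpa using (hasDerivAt_const (0 : ℝ) p).prodMk
      (((hasDerivAt_id (0 : ℝ)).smul_const v).const_add ξ)
  have hmom : HasDerivAt (fun s : ℝ => momentum (kropina g ω) (p, ξ + s • v) w)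
      (velocityHessian (kropina g ω) (p, ξ) v w) 0 := by
    have h : HasDerivAt (fun s : ℝ => momentum (kropina g ω) (p, ξ + s • v))
        (velocityHessian (kropina g ω) (p, ξ) v) 0 :=
      (hasFDerivAt_momentum hU (contDiffOn_kropina hg hω) hξ).comp_hasDerivAt_of_eq 0 hcurve
        (by simp)
    simpa only [map_zero, add_zero] using h.clm_apply (hasDerivAt_const (0 : ℝ) w)
  have hline : (fun s : ℝ => momentum (kropina g ω) (p, ξ + s • v) w) =ᶠ[nhds 0]
      fun s => 2 * (g p w ξ + s * g p w v) / (ω p ξ + s * ω p v) := by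
    have hmem : ∀ᶠ s : ℝ in nhds 0, (p, ξ + s • v) ∈ kropinaDomain ω :=
      hcurve.continuousAt.eventually_mem (hU.mem_nhds (by simpa [kropinaDomain] using hξ))
    filter_upwards [hmem] with s hs
    rw [momentum_kropina_apply (hg.differentiable (by simp) _) (hω.differentiable (by simp) _)
      (hsymm p) hs]
    simp [hw]
  have hquot : HasDerivAt (fun s : ℝ => 2 * (g p w ξ + s * g p w v) / (ω p ξ + s * ω p v))
      (2 / ω p ξ * g p (v - (ω p v / ω p ξ) • ξ) w) 0 := by
    have hnum := (((hasDerivAt_id (0 : ℝ)).mul_const (g p w v)).const_add (g p w ξ)).const_mul 2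
    have hden := ((hasDerivAt_id (0 : ℝ)).mul_const (ω p v)).const_add (ω p ξ)
    refine (hnum.fun_div hden (by simpa using hξ)).congr_deriv ?_
    rw [hsymm p _ w]
    simp only [one_mul, id_eq, zero_mul, add_zero, map_sub, map_smul, smul_eq_mul]
    field_simp
  exact hmom.unique (hquot.congr_of_eventuallyEq hline)

theorem isRegularParametricOn_kropina (hg : ContDiff ℝ (⊤ : ℕ∞) g) (hω : ContDiff ℝ (⊤ : ℕ∞) ω)
    (hsymm : ∀ p v w, g p v w = g p w v) (hnd : ∀ p, NondegenerateOnKer (g p) (ω p)) :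
    IsRegularParametricOn (kropina g ω) (kropinaDomain ω) where
  isOpen := isOpen_kropinaDomain hω.continuous
  contDiffOn := contDiffOn_kropina hg hω
  momentum_velocity z hz := by
    rw [momentum_kropina_apply (hg.differentiable (by simp) _) (hω.differentiable (by simp) _)
      (hsymm _) hz, kropina]
    have hz' : ω z.1 z.2 ≠ 0 := hz
    field_simp
    ring
  mem_span_velocity z hz v hv := by
    have hz' : ω z.1 z.2 ≠ 0 := hz
    have hproj : v - (ω z.1 v / ω z.1 z.2) • z.2 = 0 := by
      refine hnd z.1 _ (by simp [hz']) fun w hw => ?_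
      have h := velocityHessian_kropina_apply hg hω hsymm hz' hw v
      rw [Prod.mk.eta, hv] at h
      simpa [hz'] using h
    exact Submodule.mem_span_singleton.2 ⟨_, (sub_eq_zero.1 hproj).symm⟩

end Kropina

section ProjectiveIdentity

variable {E : Type*} [NormedAddCommGroup E] [NormedSpace ℝ E]

theorem dense_setOf_apply_ne_zero {ω : E →L[ℝ] ℝ} (hω : ω ≠ 0) : Dense {ξ | ω ξ ≠ 0} :=
  (dense_compl_singleton (0 : ℝ)).preimage (ω.isOpenMap_of_ne_zero hω)

theorem eq_of_forall_apply_ne_zero {ω : E →L[ℝ] ℝ} (hω : ω ≠ 0) {f f' : E → ℝ}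
    (hf : Continuous f) (hf' : Continuous f') (h : ∀ ξ, ω ξ ≠ 0 → f ξ = f' ξ) (ξ : E) :
    f ξ = f' ξ :=
  congrFun (hf.ext_on (dense_setOf_apply_ne_zero hω) hf' h) ξ

variable {G B : E →L[ℝ] E →L[ℝ] ℝ} {ω : E →L[ℝ] ℝ}

theorem NondegenerateOnKer.exists_apply_self_ne_zero [FiniteDimensional ℝ E]
    (hG : NondegenerateOnKer G ω) (hE : 1 < Module.finrank ℝ E) (hsymm : ∀ v w, G v w = G w v) :
    ∃ v, ω v = 0 ∧ G v v ≠ 0 := by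
  by_contra! hiso
  have hker : ∃ v, ω v = 0 ∧ v ≠ 0 := by
    have := LinearMap.ker_ne_bot_of_finrank_lt (f := ω.toLinearMap) (by simpa using hE)
    simpa using Submodule.exists_mem_ne_zero_of_ne_bot this
  obtain ⟨v, hωv, hv⟩ := hker
  refine hv (hG v hωv fun w hωw => ?_)
  have hpol := hiso (v + w) (by simp [hωv, hωw])
  simp only [map_add, add_apply, hiso v hωv, hiso w hωw, hsymm w v] at hpol
  linarith

theorem two_mul_apply_mul_eq_of_projective_identity {a : E →L[ℝ] ℝ} (hω : ω ≠ 0)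
    (h : ∀ ξ w, ω ξ ≠ 0 →
      a ξ * (2 * G w ξ / ω ξ - ω w * G ξ ξ / ω ξ ^ 2) + B ξ w = G ξ ξ / ω ξ * a w)
    {v w : E} (hv : ω v = 0) (hw : ω w = 0) : 2 * a v * G w v = G v v * a w := by
  have hlim := eq_of_forall_apply_ne_zero hω (f := fun ξ => 2 * a ξ * G w ξ + ω ξ * B ξ w)
    (f' := fun ξ => G ξ ξ * a w) (by fun_prop) (by fun_prop) (fun ξ hξ => by
      have hξw := h ξ w hξ
      rw [hw] at hξw
      field_simp at hξw
      refine mul_left_cancel₀ hξ ?_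
      linear_combination hξw) v
  simpa [hv] using hlim

theorem eq_zero_of_projective_identity [FiniteDimensional ℝ E] {a : E →L[ℝ] ℝ}
    (hE : 1 < Module.finrank ℝ E) (hω : ω ≠ 0) (hsymm : ∀ v w, G v w = G w v)
    (hG : NondegenerateOnKer G ω)
    (h : ∀ ξ w, ω ξ ≠ 0 →
      a ξ * (2 * G w ξ / ω ξ - ω w * G ξ ξ / ω ξ ^ 2) + B ξ w = G ξ ξ / ω ξ * a w) :
    a = 0 ∧ B = 0 := by
  obtain ⟨v, hωv, hGv⟩ := hG.exists_apply_self_ne_zero hE hsymm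
  have hav : a v = 0 := by
    have hvv : a v * G v v = 0 := by
      linear_combination two_mul_apply_mul_eq_of_projective_identity hω h hωv hωv
    exact (mul_eq_zero.1 hvv).resolve_right hGv
  have hprop : ∀ ξ w, a ξ * ω w = ω ξ * a w := by
    intro ξ w
    have hdiff := two_mul_apply_mul_eq_of_projective_identity hω h (w := ω ξ • w - ω w • ξ) hωv
      (by simp [mul_comm])
    simp only [hav, mul_zero, zero_mul, zero_eq_mul, hGv, false_or, map_sub, map_smul,
      smul_eq_mul] at hdiff
    linear_combination -hdiff
  have ha : a = 0 := by
    ext w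
    have hlim := eq_of_forall_apply_ne_zero hω (f := fun ξ => 2 * a ξ * G w ξ + ω ξ * B ξ w)
      (f' := fun ξ => 2 * G ξ ξ * a w) (by fun_prop) (by fun_prop) (fun ξ hξ => by
        have hξw := h ξ w hξ
        field_simp at hξw
        refine mul_left_cancel₀ hξ ?_
        linear_combination hξw + G ξ ξ * hprop ξ w) v
    simpa [hωv, hav, hGv] using hlim
  refine ⟨ha, ?_⟩
  ext ξ w
  exact eq_of_forall_apply_ne_zero hω (f := fun ξ => B ξ w) (f' := fun _ => 0) (by fun_prop)
    (by fun_prop) (fun ξ hξ => by simpa [ha] using h ξ w hξ) ξ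

end ProjectiveIdentity

section Rigidity

variable {E : Type*} [NormedAddCommGroup E] [NormedSpace ℝ E] [FiniteDimensional ℝ E]
  {g ghat : E → E →L[ℝ] E →L[ℝ] ℝ} {ω β : E → E →L[ℝ] ℝ} {α : E → ℝ}

theorem kropina_projective_identity (hg : ContDiff ℝ (⊤ : ℕ∞) g) (hω : ContDiff ℝ (⊤ : ℕ∞) ω)
    (hα : Differentiable ℝ α) (hβ : Differentiable ℝ β)
    (hsymm : ∀ p v w, g p v w = g p w v) (hnd : ∀ p, NondegenerateOnKer (g p) (ω p))
    (hrel : ∀ p ξ, ghat p ξ ξ = α p * g p ξ ξ + β p ξ * ω p ξ)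
    (hproj : ∀ (x : ℝ → E) (s : Set ℝ), IsOpen s → ContDiffOn ℝ (⊤ : ℕ∞) x s →
      IsKropinaExtremalOn g ω x s → IsKropinaExtremalOn ghat ω x s)
    {p ξ : E} (hξ : ω p ξ ≠ 0) :
    fderiv ℝ α p ξ • momentum (kropina g ω) (p, ξ) + fderiv ℝ β p ξ =
      kropina g ω (p, ξ) • fderiv ℝ α p + (fderiv ℝ β p).flip ξ := by
  have hξ0 : ξ ≠ 0 := by
    rintro rfl
    exact hξ (map_zero _)
  obtain ⟨x, s, hs, hs0, hxs, hx0, hx0', hxω, hxg⟩ :=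
    (isRegularParametricOn_kropina hg hω hsymm hnd).exists_isExtremalOn (p := p) hξ hξ0
  have hkropina : Set.EqOn (kropina ghat ω) (fun z => α z.1 * kropina g ω z + β z.1 z.2)
      (kropinaDomain ω) := by
    intro z hz
    have hz' : ω z.1 z.2 ≠ 0 := hz
    simp only [kropina, hrel]
    field_simp
  have h := IsExtremalOn.smul_momentum_add (isOpen_kropinaDomain hω.continuous) hkropina
    ((contDiffOn_kropina hg hω).differentiableOn (by simp)) hα hβ hs hs0
    ((hxs.differentiableOn (by simp)).differentiableAt (hs.mem_nhds hs0)) hxω hxg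
    (hproj x s hs hxs ⟨hxω, hxg⟩).2
  rwa [hx0', hx0] at h

theorem kropina_pointwise_rigidity (hE : 1 < Module.finrank ℝ E)
    (hg : ContDiff ℝ (⊤ : ℕ∞) g) (hω : ContDiff ℝ (⊤ : ℕ∞) ω)
    (hα : Differentiable ℝ α) (hβ : Differentiable ℝ β)
    (hsymm : ∀ p v w, g p v w = g p w v) (hnd : ∀ p, NondegenerateOnKer (g p) (ω p))
    (hrel : ∀ p ξ, ghat p ξ ξ = α p * g p ξ ξ + β p ξ * ω p ξ)
    (hproj : ∀ (x : ℝ → E) (s : Set ℝ), IsOpen s → ContDiffOn ℝ (⊤ : ℕ∞) x s →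
      IsKropinaExtremalOn g ω x s → IsKropinaExtremalOn ghat ω x s)
    {p : E} (hp : ω p ≠ 0) :
    fderiv ℝ α p = 0 ∧ fderiv ℝ β p = (fderiv ℝ β p).flip := by
  rw [← sub_eq_zero (a := fderiv ℝ β p)]
  refine eq_zero_of_projective_identity hE hp (hsymm p) (hnd p) fun ξ w hξ => ?_
  have h := DFunLike.congr_fun
    (kropina_projective_identity hg hω hα hβ hsymm hnd hrel hproj hξ) w
  simp only [add_apply, smul_apply, smul_eq_mul, ContinuousLinearMap.flip_apply,
    momentum_kropina_apply (z := (p, ξ)) (hg.differentiable (by simp) _)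
      (hω.differentiable (by simp) _) (hsymm _) hξ] at h
  simp only [sub_apply, ContinuousLinearMap.flip_apply]
  rw [← add_sub_assoc, sub_eq_iff_eq_add, h, kropina]

theorem kropina_rigidity (hE : 1 < Module.finrank ℝ E)
    (hg : ContDiff ℝ (⊤ : ℕ∞) g) (hω : ContDiff ℝ (⊤ : ℕ∞) ω)
    (hα : ContDiff ℝ 1 α) (hβ : ContDiff ℝ 1 β)
    (hsymm : ∀ p v w, g p v w = g p w v) (hnd : ∀ p, NondegenerateOnKer (g p) (ω p))
    (hrel : ∀ p ξ, ghat p ξ ξ = α p * g p ξ ξ + β p ξ * ω p ξ)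
    (hdense : Dense {p | ω p ≠ 0})
    (hproj : ∀ (x : ℝ → E) (s : Set ℝ), IsOpen s → ContDiffOn ℝ (⊤ : ℕ∞) x s →
      IsKropinaExtremalOn g ω x s → IsKropinaExtremalOn ghat ω x s) :
    (∀ p q, α p = α q) ∧ ∀ p v w, fderiv ℝ β p v w = fderiv ℝ β p w v := by
  have hα' := hα.differentiable one_ne_zero
  have hpt : ∀ p ∈ {p | ω p ≠ 0}, fderiv ℝ α p = 0 ∧ fderiv ℝ β p = (fderiv ℝ β p).flip :=
    fun p hp => kropina_pointwise_rigidity hE hg hω hα' (hβ.differentiable one_ne_zero)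
      hsymm hnd hrel hproj hp
  have hdα : fderiv ℝ α = fun _ => 0 := (hα.continuous_fderiv one_ne_zero).ext_on hdense
    continuous_const fun p hp => (hpt p hp).1
  refine ⟨is_const_of_fderiv_eq_zero hα' (congrFun hdα), fun p v w => ?_⟩
  have hdβ := hβ.continuous_fderiv one_ne_zero
  have hclosed : (fun p => fderiv ℝ β p v w) = fun p => fderiv ℝ β p w v :=
    Continuous.ext_on hdense ((hdβ.clm_apply continuous_const).clm_apply continuous_const)
      ((hdβ.clm_apply continuous_const).clm_apply continuous_const) fun p hp =>
        DFunLike.congr_fun (DFunLike.congr_fun (hpt p hp).2 v) w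
  exact congrFun hclosed p

end Rigidity

section Coordinates

variable {n : ℕ} {g ghat : Fin n → Fin n → (Fin n → ℝ) → ℝ} {ω β : Fin n → (Fin n → ℝ) → ℝ}
  {α : (Fin n → ℝ) → ℝ}

/-- The field of covectors on `ℝⁿ` with components `ω i`. -/
noncomputable def covectorField (ω : Fin n → (Fin n → ℝ) → ℝ) (p : Fin n → ℝ) :
    (Fin n → ℝ) →L[ℝ] ℝ :=
  ∑ i, ω i p • ContinuousLinearMap.proj i

/-- The field of bilinear forms on `ℝⁿ` with components `g i j`. -/
noncomputable def tensorField (g : Fin n → Fin n → (Fin n → ℝ) → ℝ) (p : Fin n → ℝ) :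
    (Fin n → ℝ) →L[ℝ] (Fin n → ℝ) →L[ℝ] ℝ :=
  ∑ i, ∑ j, g i j p •
    (ContinuousLinearMap.proj i : (Fin n → ℝ) →L[ℝ] ℝ).smulRight (ContinuousLinearMap.proj j)

theorem covectorField_apply (ω : Fin n → (Fin n → ℝ) → ℝ) (p v : Fin n → ℝ) :
    covectorField ω p v = ∑ i, ω i p * v i := by
  simp [covectorField]

theorem tensorField_apply (g : Fin n → Fin n → (Fin n → ℝ) → ℝ) (p v w : Fin n → ℝ) :
    tensorField g p v w = ∑ i, ∑ j, g i j p * v i * w j := by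
  simp [tensorField, mul_assoc]

theorem tensorField_comm (hg : ∀ i j, g i j = g j i) (p v w : Fin n → ℝ) :
    tensorField g p v w = tensorField g p w v := by
  simp only [tensorField_apply]
  rw [Finset.sum_comm]
  exact Finset.sum_congr rfl fun i _ => Finset.sum_congr rfl fun j _ => by
    rw [hg j i, mul_right_comm]

theorem contDiff_covectorField {m : WithTop ℕ∞} (hω : ∀ i, ContDiff ℝ m (ω i)) :
    ContDiff ℝ m (covectorField ω) := by
  rw [contDiff_clm_apply_iff]
  intro v
  simp only [covectorField_apply]
  fun_prop

theorem contDiff_tensorField {m : WithTop ℕ∞} (hg : ∀ i j, ContDiff ℝ m (g i j)) :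
    ContDiff ℝ m (tensorField g) := by
  simp only [contDiff_clm_apply_iff, tensorField_apply]
  fun_prop

theorem fderiv_covectorField_single (hω : ∀ i, ContDiff ℝ 1 (ω i)) (p : Fin n → ℝ) (k : Fin n)
    (v : Fin n → ℝ) :
    fderiv ℝ (covectorField ω) p (Pi.single k 1) v = ∑ i, pd (ω i) p k * v i := by
  have hω' := ((contDiff_covectorField hω).differentiable one_ne_zero p).hasFDerivAt
  have heval : HasFDerivAt (fun q => covectorField ω q v) _ p :=
    hω'.clm_apply (hasFDerivAt_const v p)
  have hsum : HasFDerivAt (fun q => ∑ i, ω i q * v i) _ p :=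
    HasFDerivAt.fun_sum fun i _ =>
      ((hω i).differentiable one_ne_zero p).hasFDerivAt.mul_const (v i)
  simp only [covectorField_apply] at heval
  simpa [pd, mul_comm] using DFunLike.congr_fun (heval.unique hsum) (Pi.single k 1)

theorem fderiv_tensorField_single (hg : ∀ i j, ContDiff ℝ 1 (g i j)) (p : Fin n → ℝ) (k : Fin n)
    (v w : Fin n → ℝ) :
    fderiv ℝ (tensorField g) p (Pi.single k 1) v w = ∑ i, ∑ j, pd (g i j) p k * v i * w j := by
  have hg' := ((contDiff_tensorField hg).differentiable one_ne_zero p).hasFDerivAt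
  have heval : HasFDerivAt (fun q => tensorField g q v w) _ p :=
    (hg'.clm_apply (hasFDerivAt_const v p)).clm_apply (hasFDerivAt_const w p)
  have hsum : HasFDerivAt (fun q => ∑ i, ∑ j, g i j q * v i * w j) _ p :=
    HasFDerivAt.fun_sum fun i _ => HasFDerivAt.fun_sum fun j _ =>
      (((hg i j).differentiable one_ne_zero p).hasFDerivAt.mul_const (v i)).mul_const (w j)
  simp only [tensorField_apply] at heval
  simpa [pd, mul_comm, mul_left_comm] using
    DFunLike.congr_fun (heval.unique hsum) (Pi.single k 1)

theorem momentum_kropina_single (hgsymm : ∀ i j, g i j = g j i)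
    (hg : ∀ i j, ContDiff ℝ 1 (g i j)) (hω : ∀ i, ContDiff ℝ 1 (ω i))
    {p ξ : Fin n → ℝ} (hξ : covectorField ω p ξ ≠ 0) (k : Fin n) :
    momentum (kropina (tensorField g) (covectorField ω)) (p, ξ) (Pi.single k 1) =
      Fxi g ω k p ξ := by
  rw [momentum_kropina_apply (z := (p, ξ))
    ((contDiff_tensorField hg).differentiable one_ne_zero p)
    ((contDiff_covectorField hω).differentiable one_ne_zero p) (tensorField_comm hgsymm p) hξ]
  simp only [Fxi, Fden, Fnum, covectorField_apply, tensorField_apply, Pi.single_apply, mul_ite,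
    mul_one, mul_zero, ite_mul, zero_mul, Finset.sum_ite_irrel, Finset.sum_const_zero,
    Finset.sum_ite_eq', Finset.mem_univ, ↓reduceIte]
  ring

theorem positionDeriv_kropina_single
    (hg : ∀ i j, ContDiff ℝ 1 (g i j)) (hω : ∀ i, ContDiff ℝ 1 (ω i))
    {p ξ : Fin n → ℝ} (hξ : covectorField ω p ξ ≠ 0) (k : Fin n) :
    positionDeriv (kropina (tensorField g) (covectorField ω)) (p, ξ) (Pi.single k 1) =
      Fx g ω k p ξ := by
  rw [positionDeriv_kropina_apply (z := (p, ξ))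
    ((contDiff_tensorField hg).differentiable one_ne_zero p)
    ((contDiff_covectorField hω).differentiable one_ne_zero p) hξ, fderiv_covectorField_single hω,
    fderiv_tensorField_single hg]
  simp only [Fx, Fden, Fnum, covectorField_apply, tensorField_apply]
  ring

theorem hasDerivAt_dual_iff_single {f : ℝ → (Fin n → ℝ) →L[ℝ] ℝ} {f' : (Fin n → ℝ) →L[ℝ] ℝ}
    {t : ℝ} : HasDerivAt f f' t ↔
      ∀ k, HasDerivAt (fun u => f u (Pi.single k 1)) (f' (Pi.single k 1)) t := by
  refine ⟨fun h k => by simpa using h.clm_apply (hasDerivAt_const t (Pi.single k (1 : ℝ))),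
    fun h => ?_⟩
  have hdual : ∀ φ : (Fin n → ℝ) →L[ℝ] ℝ,
      φ = covectorField (fun k _ => φ (Pi.single k 1)) 0 := fun φ =>
    ContinuousLinearMap.coe_injective <| (Pi.basisFun ℝ (Fin n)).ext fun k => by
      simp [covectorField_apply, Pi.single_apply]
  have hsum : HasDerivAt (fun u => covectorField (fun k _ => f u (Pi.single k 1)) 0)
      (covectorField (fun k _ => f' (Pi.single k 1)) 0) t :=
    HasDerivAt.fun_sum fun k _ =>
      (h k).smul_const (ContinuousLinearMap.proj k : (Fin n → ℝ) →L[ℝ] ℝ)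
  simpa only [← hdual] using hsum

theorem isKropinaGeodesicOn_iff_tensorField (hgsymm : ∀ i j, g i j = g j i)
    (hg : ∀ i j, ContDiff ℝ 1 (g i j)) (hω : ∀ i, ContDiff ℝ 1 (ω i)) {x : ℝ → Fin n → ℝ}
    {s : Set ℝ} (hs : IsOpen s) :
    IsKropinaGeodesicOn g ω x s ↔
      IsKropinaExtremalOn (tensorField g) (covectorField ω) x s := by
  have hdom : ∀ z : (Fin n → ℝ) × (Fin n → ℝ),
      z ∈ kropinaDomain (covectorField ω) ↔ Fden ω z.1 z.2 ≠ 0 := by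
    intro z
    simp [kropinaDomain, covectorField_apply, Fden]
  rw [IsKropinaGeodesicOn, forall₂_and, IsKropinaExtremalOn]
  simp only [← hdom (_, _)]
  refine and_congr_right fun hx => forall₂_congr fun t ht => ?_
  rw [hasDerivAt_dual_iff_single]
  refine forall_congr' fun k => ?_
  rw [positionDeriv_kropina_single hg hω (hx t ht)]
  refine Filter.EventuallyEq.hasDerivAt_iff ?_
  filter_upwards [hs.mem_nhds ht] with u hu
  exact (momentum_kropina_single hgsymm hg hω (hx u hu) k).symm

theorem tensorField_apply_self_of_projective_change
    (hrel : ∀ i j p, ghat i j p = α p * g i j p + (β i p * ω j p + β j p * ω i p) / 2)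
    (p ξ : Fin n → ℝ) :
    tensorField ghat p ξ ξ =
      α p * tensorField g p ξ ξ + covectorField β p ξ * covectorField ω p ξ := by
  have hprod : ∀ a b : Fin n → (Fin n → ℝ) → ℝ, covectorField a p ξ * covectorField b p ξ =
      ∑ i, ∑ j, a i p * b j p * ξ i * ξ j := by
    intro a b
    rw [covectorField_apply, covectorField_apply, Finset.sum_mul_sum]
    exact Finset.sum_congr rfl fun i _ => Finset.sum_congr rfl fun j _ => by ring
  have hsymm : covectorField β p ξ * covectorField ω p ξ =
      (covectorField β p ξ * covectorField ω p ξ +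
        covectorField ω p ξ * covectorField β p ξ) / 2 := by ring
  rw [hsymm, hprod, hprod]
  simp only [tensorField_apply, hrel, Finset.mul_sum, Finset.sum_div, ← Finset.sum_add_distrib]
  exact Finset.sum_congr rfl fun i _ => Finset.sum_congr rfl fun j _ => by ring

theorem covectorField_ne_zero_iff {p : Fin n → ℝ} : covectorField ω p ≠ 0 ↔ ∃ i, ω i p ≠ 0 := by
  have hcomp : ∀ i, covectorField ω p (Pi.single i 1) = ω i p := fun i => by
    simp [covectorField_apply, Pi.single_apply]
  refine ⟨fun h => ?_, fun ⟨i, hi⟩ h => hi (by rw [← hcomp, h, zero_apply])⟩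
  by_contra! hω
  exact h (by simp [covectorField, hω])

/-- The component `(i, j, k)` of the three-form `ω ∧ dω` at `p`. -/
noncomputable def wedgeExteriorDeriv (ω : Fin n → (Fin n → ℝ) → ℝ) (p : Fin n → ℝ)
    (i j k : Fin n) : ℝ :=
  ω i p * (pd (ω k) p j - pd (ω j) p k) + ω j p * (pd (ω i) p k - pd (ω k) p i)
    + ω k p * (pd (ω j) p i - pd (ω i) p j)

theorem exists_apply_ne_zero_of_wedgeExteriorDeriv_ne_zero {p : Fin n → ℝ}
    (h : ∃ i j k, wedgeExteriorDeriv ω p i j k ≠ 0) : ∃ l, ω l p ≠ 0 := by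
  obtain ⟨i, j, k, hijk⟩ := h
  by_contra! hω
  exact hijk (by simp [wedgeExteriorDeriv, hω])

theorem two_le_of_wedgeExteriorDeriv_ne_zero {p : Fin n → ℝ}
    (h : ∃ i j k, wedgeExteriorDeriv ω p i j k ≠ 0) : 2 ≤ n := by
  obtain ⟨i, j, k, hijk⟩ := h
  by_contra! hn
  have : Subsingleton (Fin n) := Fin.subsingleton_iff_le_one.2 (by omega)
  exact hijk (by simp [wedgeExteriorDeriv, Subsingleton.elim j i, Subsingleton.elim k i])

end Coordinates

theorem stmt13_general {n : ℕ} (hn : 2 ≤ n)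
    (g ghat : Fin n → Fin n → (Fin n → ℝ) → ℝ) (ω β : Fin n → (Fin n → ℝ) → ℝ)
    (α : (Fin n → ℝ) → ℝ)
    (hgsymm : ∀ i j, g i j = g j i)
    (hgsm : ∀ i j, ContDiff ℝ (⊤ : ℕ∞) (g i j))
    (hωsm : ∀ i, ContDiff ℝ (⊤ : ℕ∞) (ω i)) (hβsm : ∀ i, ContDiff ℝ 1 (β i))
    (hαsm : ContDiff ℝ 1 α)
    (hrel : ∀ i j p, ghat i j p
      = α p * g i j p + (β i p * ω j p + β j p * ω i p) / 2)
    (hnd : ∀ (p v : Fin n → ℝ), (∑ l, ω l p * v l) = 0 →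
      (∀ w : Fin n → ℝ, (∑ l, ω l p * w l) = 0 →
        (∑ i, ∑ j, g i j p * v i * w j) = 0) → v = 0)
    (hdense : Dense {p : Fin n → ℝ | ∃ i, ω i p ≠ 0})
    (hproj : ∀ (x : ℝ → Fin n → ℝ) (s : Set ℝ), IsOpen s → ContDiffOn ℝ (⊤ : ℕ∞) x s →
      IsKropinaGeodesicOn g ω x s → IsKropinaGeodesicOn ghat ω x s) :
    (∀ p q : Fin n → ℝ, α p = α q) ∧
    (∀ (p : Fin n → ℝ) (i j : Fin n), pd (β j) p i = pd (β i) p j) := by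
  have hg : ∀ i j, ContDiff ℝ 1 (g i j) := fun i j => (hgsm i j).of_le (by simp)
  have hω : ∀ i, ContDiff ℝ 1 (ω i) := fun i => (hωsm i).of_le (by simp)
  have hghatsymm : ∀ i j, ghat i j = ghat j i := fun i j => by
    ext p
    rw [hrel, hrel, hgsymm, add_comm (β i p * ω j p)]
  have hghat : ∀ i j, ContDiff ℝ 1 (ghat i j) := fun i j => by
    rw [funext (hrel i j)]
    fun_prop
  obtain ⟨hα, hβ⟩ := kropina_rigidity (α := α) (by rwa [Module.finrank_fin_fun])
    (contDiff_tensorField hgsm) (contDiff_covectorField hωsm) hαsm (contDiff_covectorField hβsm)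
    (tensorField_comm hgsymm)
    (fun p v => by simpa only [covectorField_apply, tensorField_apply] using hnd p v)
    (tensorField_apply_self_of_projective_change hrel)
    (by simpa only [covectorField_ne_zero_iff] using hdense) fun x s hs hxs hx =>
      (isKropinaGeodesicOn_iff_tensorField hghatsymm hghat hω hs).1 (hproj x s hs hxs
        ((isKropinaGeodesicOn_iff_tensorField hgsymm hg hω hs).2 hx))
  refine ⟨hα, fun p i j => ?_⟩
  simpa [fderiv_covectorField_single hβsm, Pi.single_apply] using
    hβ p (Pi.single i 1) (Pi.single j 1)

/-- If `F = g/ω` and `F̂ = ĝ/ω` with `ĝ = αg + β·ω` are projectively equivalent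
(have the same geodesics) and `ker ω` is non-integrable on a dense set
(`ω ∧ dω ≠ 0`), then `α` is constant and `β` is closed. -/
theorem stmt13 {n : ℕ}
    (g ghat : Fin n → Fin n → (Fin n → ℝ) → ℝ) (ω β : Fin n → (Fin n → ℝ) → ℝ)
    (α : (Fin n → ℝ) → ℝ)
    (hgsymm : ∀ i j, g i j = g j i) (hghatsymm : ∀ i j, ghat i j = ghat j i)
    (hgsm : ∀ i j, ContDiff ℝ (⊤ : ℕ∞) (g i j)) (hghatsm : ∀ i j, ContDiff ℝ (⊤ : ℕ∞) (ghat i j))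
    (hωsm : ∀ i, ContDiff ℝ (⊤ : ℕ∞) (ω i)) (hβsm : ∀ i, ContDiff ℝ (⊤ : ℕ∞) (β i))
    (hαsm : ContDiff ℝ (⊤ : ℕ∞) α)
    (hrel : ∀ i j p, ghat i j p
      = α p * g i j p + (β i p * ω j p + β j p * ω i p) / 2)
    (hnd : ∀ (p v : Fin n → ℝ), (∑ l, ω l p * v l) = 0 →
      (∀ w : Fin n → ℝ, (∑ l, ω l p * w l) = 0 →
        (∑ i, ∑ j, g i j p * v i * w j) = 0) → v = 0)
    (hndhat : ∀ (p v : Fin n → ℝ), (∑ l, ω l p * v l) = 0 →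
      (∀ w : Fin n → ℝ, (∑ l, ω l p * w l) = 0 →
        (∑ i, ∑ j, ghat i j p * v i * w j) = 0) → v = 0)
    (hdense : Dense {p : Fin n → ℝ | ∃ i j k,
      ω i p * (pd (ω k) p j - pd (ω j) p k)
        + ω j p * (pd (ω i) p k - pd (ω k) p i)
        + ω k p * (pd (ω j) p i - pd (ω i) p j) ≠ 0})
    (hproj : ∀ (x : ℝ → Fin n → ℝ) (s : Set ℝ), IsOpen s → ContDiffOn ℝ (⊤ : ℕ∞) x s →
      (IsKropinaGeodesicOn g ω x s ↔ IsKropinaGeodesicOn ghat ω x s)) :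
    (∀ p q : Fin n → ℝ, α p = α q) ∧
    (∀ (p : Fin n → ℝ) (i j : Fin n), pd (β j) p i = pd (β i) p j) := by
  obtain ⟨p, hp⟩ := hdense.nonempty
  exact stmt13_general (two_le_of_wedgeExteriorDeriv_ne_zero hp) g ghat ω β α hgsymm hgsm hωsm
    (fun i => (hβsm i).of_le (by simp)) (hαsm.of_le (by simp)) hrel hnd
    (hdense.mono fun _ => exists_apply_ne_zero_of_wedgeExteriorDeriv_ne_zero)
    fun x s hs hxs => (hproj x s hs hxs).1
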